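/- arXiv:1407.0249 — 3 statements merged into one kernel-verified Lean document; each statement's English description precedes it below -/
import Mathlib

section
/- Let d ≥ 1, p ≥ 1, let W ⊂ ℝ^d be compact, let β ∈ ℝ, θ ∈ ℝ^p, and let h, z ∈ C¹(ℝ^d, ℝ^p) with h(u) = 0 whenever u ∉ W. Define ρ(u) = exp(β + ⟨θ, z(u)⟩). Then, as an equality of vectors in ℝ^p, ∫_W ⟨θ, div z(u)⟩ h(u) ρ(u) du = −∫_W div h(u) ρ(u) du; equivalently, the p×p matrix S = ∫_W h(u) (div z(u))ᵀ ρ(u) du satisfies S θ = −∫_W div h(u) ρ(u) du. -/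
open MeasureTheory

/-- The divergence of a vector-valued function `h : ℝ^d → ℝ^p`, computed componentwise:
`div h(u) = (div h_1(u), …, div h_p(u))` where `div h_k(u) = Σ_{j=1}^d ∂h_k/∂u_j(u)`. -/
noncomputable def divergVec (d p : ℕ) (h : (Fin d → ℝ) → (Fin p → ℝ)) (u : Fin d → ℝ) :
    Fin p → ℝ :=
  fun k => ∑ j : Fin d, fderiv ℝ (fun v => h v k) u (Pi.single j 1)

theorem divergVec_eq_fderiv (d p : ℕ) (h : (Fin d → ℝ) → (Fin p → ℝ)) (hh : Differentiable ℝ h)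
    (u : Fin d → ℝ) : divergVec d p h u = fderiv ℝ h u (fun _ => 1) := by
  have h1 : (fun _ => (1:ℝ)) = ∑ j : Fin d, (Pi.single j (1:ℝ) : Fin d → ℝ) := by
    rw [Finset.univ_sum_single]
  funext k
  have h2 : HasFDerivAt (fun v => h v k)
      ((ContinuousLinearMap.proj k : (Fin p → ℝ) →L[ℝ] ℝ).comp (fderiv ℝ h u)) u :=
    hasFDerivAt_pi'.1 (hh u).hasFDerivAt k
  simp only [divergVec, h2.fderiv]
  rw [h1, map_sum]
  simp

theorem statement4 (d p : ℕ) (hd : 1 ≤ d) (hp : 1 ≤ p) (W : Set (Fin d → ℝ))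
    (hW : IsCompact W) (β : ℝ) (θ : Fin p → ℝ)
    (h z : (Fin d → ℝ) → (Fin p → ℝ)) (hh : ContDiff ℝ 1 h) (hz : ContDiff ℝ 1 z)
    (hsupp : ∀ u, u ∉ W → h u = 0)
    (ρ : (Fin d → ℝ) → ℝ) (hρ : ∀ u, ρ u = Real.exp (β + ∑ k, θ k * z u k)) :
    (∫ u in W, ((∑ k, θ k * divergVec d p z u k) * ρ u) • h u) =
      -∫ u in W, ρ u • divergVec d p h u := by
  have hhd : Differentiable ℝ h := hh.differentiable one_ne_zero
  have hzd : Differentiable ℝ z := hz.differentiable one_ne_zero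
  have hρe : ρ = fun u => Real.exp (β + ∑ k, θ k * z u k) := funext hρ
  have hρc : ContDiff ℝ 1 ρ := by
    rw [hρe]
    have : ∀ k, ContDiff ℝ 1 (fun u => z u k) := fun k => contDiff_pi.1 hz k
    fun_prop
  have hρd : Differentiable ℝ ρ := hρc.differentiable one_ne_zero
  have hcs : HasCompactSupport h := HasCompactSupport.intro hW (fun u hu => hsupp u hu)
  have hdρ : ∀ u, fderiv ℝ ρ u (fun _ => 1) = (∑ k, θ k * divergVec d p z u k) * ρ u := by
    intro u
    have hk : ∀ k, HasFDerivAt (fun v => z v k)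
        ((ContinuousLinearMap.proj k : (Fin p → ℝ) →L[ℝ] ℝ).comp (fderiv ℝ z u)) u :=
      fun k => hasFDerivAt_pi'.1 (hzd u).hasFDerivAt k
    have hs := ((HasFDerivAt.fun_sum (u := Finset.univ)
      (fun k _ => (hk k).const_mul (θ k))).const_add β).exp
    rw [hρe, hs.fderiv, divergVec_eq_fderiv d p z hzd]
    simp [mul_comm]
  have hz0 : ∀ u, u ∉ W → fderiv ℝ h u = 0 := by
    intro u hu
    have : h =ᶠ[nhds u] fun _ => 0 := by
      filter_upwards [hW.isClosed.isOpen_compl.mem_nhds hu] with v hv using hsupp v hv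
    rw [this.fderiv_eq]
    simp
  simp_rw [← hdρ, divergVec_eq_fderiv d p h hhd]
  rw [setIntegral_eq_integral_of_forall_compl_eq_zero (fun u hu => by simp [hsupp u hu]),
    setIntegral_eq_integral_of_forall_compl_eq_zero (fun u hu => by simp [hz0 u hu]),
    integral_smul_fderiv_eq_neg_fderiv_smul_of_integrable, neg_neg]
  · exact (((hρc.continuous_fderiv one_ne_zero).clm_apply continuous_const).smul
      hh.continuous).integrable_of_hasCompactSupport hcs.smul_left
  · exact (hρc.continuous.smul ((hh.continuous_fderiv one_ne_zero).clm_apply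
      continuous_const)).integrable_of_hasCompactSupport
      (HasCompactSupport.intro hW (fun u hu => by simp [hz0 u hu]))
  · exact (hρc.continuous.smul hh.continuous).integrable_of_hasCompactSupport hcs.smul_left
  · exact fun x _ => hρd x
  · exact fun x _ => hhd x
end

section
/- Let d ≥ 1, let A ⊂ ℝ^d be convex and compact with the origin in its interior, and W_n = nA. Then there exists a constant C > 0 (depending only on d and A) such that for every n ≥ 1 the number of boundary cubes satisfies #∂I_n ≤ C n^{d−1}. -/
open MeasureTheory Pointwise

/-- The unit cube `C_i = i + (−1/2,1/2]^d` centered at the lattice point `i ∈ ℤ^d`. -/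
def cube (d : ℕ) (i : Fin d → ℤ) : Set (EuclideanSpace ℝ (Fin d)) :=
  {u | ∀ j, u j ∈ Set.Ioc ((i j : ℝ) - 1 / 2) ((i j : ℝ) + 1 / 2)}

/-- `I_n`-type index set: lattice points whose cube is contained in `Wn`. -/
def latticeIn (d : ℕ) (Wn : Set (EuclideanSpace ℝ (Fin d))) : Set (Fin d → ℤ) :=
  {i | cube d i ⊆ Wn}

/-- `∂I_n`-type index set: lattice points not in `latticeIn` whose cube meets `Wn`. -/
def latticeBd (d : ℕ) (Wn : Set (EuclideanSpace ℝ (Fin d))) : Set (Fin d → ℤ) :=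
  {i | i ∉ latticeIn d Wn ∧ (cube d i ∩ Wn).Nonempty}

/-- `W_n^⋆ = ∪_{i ∈ I_n} C_i`. -/
def WnStar (d : ℕ) (Wn : Set (EuclideanSpace ℝ (Fin d))) : Set (EuclideanSpace ℝ (Fin d)) :=
  ⋃ i ∈ latticeIn d Wn, cube d i

/-- `W_{∂I_n} = ∪_{i ∈ ∂I_n} C_i`. -/
def WnBd (d : ℕ) (Wn : Set (EuclideanSpace ℝ (Fin d))) : Set (EuclideanSpace ℝ (Fin d)) :=
  ⋃ i ∈ latticeBd d Wn, cube d i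


lemma aux_pow (a b : ℝ) (hb : 0 ≤ b) (hab : b ≤ a) (m : ℕ) :
    a ^ (m + 1) - b ^ (m + 1) ≤ (m + 1) * (a - b) * a ^ m := by
  have ha : 0 ≤ a := hb.trans hab
  induction m with
  | zero => simp
  | succ m ih =>
    have h1 : b ^ (m + 1) ≤ a ^ (m + 1) := pow_le_pow_left₀ hb hab _
    have h2 := mul_le_mul_of_nonneg_left ih ha
    have h3 := mul_le_mul_of_nonneg_left h1 (sub_nonneg.2 hab)
    push_cast
    calc a ^ (m + 1 + 1) - b ^ (m + 1 + 1)
        = a * (a ^ (m + 1) - b ^ (m + 1)) + (a - b) * b ^ (m + 1) := by ring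
      _ ≤ a * ((m + 1) * (a - b) * a ^ m) + (a - b) * a ^ (m + 1) := add_le_add h2 h3
      _ = _ := by ring

lemma cube_eq_pre (d : ℕ) (i : Fin d → ℤ) :
    cube d i = (MeasurableEquiv.toLp 2 (Fin d → ℝ)).symm ⁻¹'
      (Set.univ.pi fun j => Set.Ioc ((i j : ℝ) - 1 / 2) ((i j : ℝ) + 1 / 2)) := by
  ext u
  simp [cube]

lemma cube_meas (d : ℕ) (i : Fin d → ℤ) : MeasurableSet (cube d i) := by
  rw [cube_eq_pre]
  exact (MeasurableEquiv.measurable _) (MeasurableSet.univ_pi fun j => measurableSet_Ioc)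

lemma cube_vol (d : ℕ) (i : Fin d → ℤ) : volume (cube d i) = 1 := by
  rw [cube_eq_pre, (EuclideanSpace.volume_preserving_symm_measurableEquiv_toLp (Fin d)).measure_preimage
    (MeasurableSet.univ_pi fun j => measurableSet_Ioc).nullMeasurableSet, volume_pi_pi]
  apply Finset.prod_eq_one
  intro j _
  rw [Real.volume_Ioc]
  norm_num

lemma cube_disj (d : ℕ) (i i' : Fin d → ℤ) (h : i ≠ i') : Disjoint (cube d i) (cube d i') := by
  rw [Set.disjoint_left]
  intro u hu hu'
  apply h
  funext j
  obtain ⟨h1, h2⟩ := hu j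
  obtain ⟨h3, h4⟩ := hu' j
  have a1 : (i j : ℝ) < i' j + 1 := by linarith
  have a2 : (i' j : ℝ) < i j + 1 := by linarith
  have a1' : i j < i' j + 1 := by exact_mod_cast a1
  have a2' : i' j < i j + 1 := by exact_mod_cast a2
  omega

lemma cube_dist (d : ℕ) (i : Fin d → ℤ) (x y : EuclideanSpace ℝ (Fin d))
    (hx : x ∈ cube d i) (hy : y ∈ cube d i) : ‖x - y‖ ≤ √d := by
  rw [EuclideanSpace.norm_eq]
  apply Real.sqrt_le_sqrt
  calc ∑ j, ‖(x - y) j‖ ^ 2 ≤ ∑ j : Fin d, (1 : ℝ) := by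
        apply Finset.sum_le_sum
        intro j _
        obtain ⟨h1, h2⟩ := hx j
        obtain ⟨h3, h4⟩ := hy j
        have : |x j - y j| ≤ 1 := by rw [abs_le]; constructor <;> linarith
        simpa using this
    _ = d := by simp

lemma count_le (d : ℕ) (S : Set (Fin d → ℤ)) (B : Set (EuclideanSpace ℝ (Fin d)))
    (hB : volume B ≠ ⊤) (h : ∀ i ∈ S, cube d i ⊆ B) : (S.ncard : ℝ) ≤ volume.real B := by
  by_cases hS : S.Finite
  · have h1 : volume (⋃ i ∈ hS.toFinset, cube d i) = S.ncard := by
      rw [measure_biUnion_finset (fun i _ j _ hij => cube_disj d i j hij)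
        (fun i _ => cube_meas d i)]
      simp [cube_vol, Set.ncard_eq_toFinset_card S hS]
    have h2 : (⋃ i ∈ hS.toFinset, cube d i) ⊆ B := by
      apply Set.iUnion₂_subset
      intro i hi
      exact h i (by simpa using hi)
    have h3 := measureReal_mono h2 hB
    rw [measureReal_def, h1] at h3
    simpa using h3
  · rw [Set.Infinite.ncard hS]
    simp

theorem statement9 (d : ℕ) (hd : 1 ≤ d) (A : Set (EuclideanSpace ℝ (Fin d)))
    (hconv : Convex ℝ A) (hcomp : IsCompact A)
    (h0 : (0 : EuclideanSpace ℝ (Fin d)) ∈ interior A) :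
    ∃ C : ℝ, 0 < C ∧ ∀ n : ℕ, 1 ≤ n →
      ((latticeBd d ((n : ℝ) • A)).ncard : ℝ) ≤ C * (n : ℝ) ^ (d - 1) := by
  obtain ⟨m, rfl⟩ : ∃ m, d = m + 1 := ⟨d - 1, by omega⟩
  obtain ⟨r, hr, hrA⟩ := Metric.mem_nhds_iff.1 (mem_interior_iff_mem_nhds.1 h0)
  obtain ⟨k, hk0, hk⟩ : ∃ k : ℝ, 0 < k ∧ √((m + 1 : ℕ) : ℝ) < k * r :=
    ⟨(√((m + 1 : ℕ) : ℝ) + 1) / r, by positivity, by field_simp; linarith⟩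
  -- the ball of radius `√d` lies in `k • A`
  have hball : ∀ v : EuclideanSpace ℝ (Fin (m + 1)), ‖v‖ ≤ √((m + 1 : ℕ) : ℝ) → v ∈ k • A := by
    intro v hv
    rw [Set.mem_smul_set_iff_inv_smul_mem₀ hk0.ne']
    apply hrA
    rw [mem_ball_zero_iff, norm_smul, norm_inv, Real.norm_of_nonneg hk0.le,
      inv_mul_lt_iff₀ hk0]
    exact hv.trans_lt hk
  have hV : ∀ t : ℝ, 0 ≤ t → volume.real (t • A) = t ^ (m + 1) * volume.real A := by
    intro t ht
    rw [measureReal_def, Measure.addHaar_smul, ENNReal.toReal_mul, ENNReal.toReal_ofReal (abs_nonneg _),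
      finrank_euclideanSpace_fin, abs_of_nonneg (by positivity), measureReal_def]
  have hfin : ∀ t : ℝ, volume (t • A) ≠ ⊤ := fun t => (hcomp.smul t).measure_lt_top.ne
  set V := volume.real A with hVdef
  have hV0 : 0 ≤ V := measureReal_nonneg
  refine ⟨(m + 1) * (2 * k) * (1 + k) ^ m * V + 1, by positivity, ?_⟩
  intro n hn
  have hn1 : (1 : ℝ) ≤ n := by exact_mod_cast hn
  have houter : ∀ i ∈ latticeBd (m + 1) ((n : ℝ) • A), cube (m + 1) i ⊆ ((n : ℝ) + k) • A := by
    rintro i ⟨-, x, hx, hxA⟩ z hz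
    rw [hconv.add_smul (by linarith) hk0.le]
    exact Set.mem_add.2 ⟨x, hxA, z - x, hball _ (cube_dist _ i z x hz hx), by abel⟩
  have hpow : ((n : ℝ) + k) ^ m ≤ (1 + k) ^ m * (n : ℝ) ^ m := by
    rw [← mul_pow]
    exact pow_le_pow_left₀ (by linarith) (by nlinarith) _
  have hpn : (0 : ℝ) ≤ (n : ℝ) ^ m := by positivity
  have key : ((latticeBd (m + 1) ((n : ℝ) • A)).ncard : ℝ)
      ≤ (m + 1) * (2 * k) * ((n : ℝ) + k) ^ m * V := by
    by_cases hnk : k ≤ n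
    · have hsub : ((n : ℝ) - k) • A ⊆ ((n : ℝ) + k) • A := by
        have e : (n : ℝ) + k = (n - k) + 2 * k := by ring
        rw [e, hconv.add_smul (by linarith) (by linarith)]
        intro z hz
        exact Set.mem_add.2 ⟨z, hz, 0, ⟨0, interior_subset h0, by simp⟩, by simp⟩
      have h1 := count_le (m + 1) (latticeBd (m + 1) ((n : ℝ) • A))
        ((((n : ℝ) + k) • A) \ (((n : ℝ) - k) • A))
        (measure_ne_top_of_subset Set.diff_subset (hfin _)) (by
          intro i hi z hz
          refine ⟨houter i hi hz, fun hz' => hi.1 ?_⟩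
          intro y hy
          have e : (n : ℝ) = (n - k) + k := by ring
          rw [e, hconv.add_smul (by linarith) hk0.le]
          exact Set.mem_add.2 ⟨z, hz', y - z, hball _ (cube_dist _ i y z hy hz), by abel⟩)
      rw [measureReal_diff hsub (hcomp.smul _).measurableSet (hfin _), hV _ (by linarith),
        hV _ (by linarith), ← sub_mul] at h1
      refine h1.trans (mul_le_mul_of_nonneg_right ?_ hV0)
      have := aux_pow ((n : ℝ) + k) (n - k) (by linarith) (by linarith) m
      have e : (n : ℝ) + k - (n - k) = 2 * k := by ring
      rwa [e] at this
    · have h1 := count_le (m + 1) (latticeBd (m + 1) ((n : ℝ) • A)) _ (hfin _) houter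
      rw [hV _ (by linarith)] at h1
      refine h1.trans (mul_le_mul_of_nonneg_right ?_ hV0)
      rw [pow_succ']
      refine mul_le_mul_of_nonneg_right ?_ (by positivity)
      push Not at hnk
      have : (0 : ℝ) ≤ m := by positivity
      nlinarith
  simp only [Nat.add_sub_cancel]
  have h2 : (m + 1) * (2 * k) * ((n : ℝ) + k) ^ m * V
      ≤ (m + 1) * (2 * k) * ((1 + k) ^ m * (n : ℝ) ^ m) * V := by gcongr
  nlinarith
end

section
/- Let d ≥ 1, let A ⊂ ℝ^d be convex and compact with the origin in its interior, W_n = nA, and let α ∈ [0,1) and ε_n = n^α. Then there exists a constant C > 0 such that for all sufficiently large n, the Lebesgue measure of the eroded annulus satisfies |W_n^⋆ \ (W_n^⋆)⊖(2ε_n)| ≤ C n^{d−1+α}. -/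
open MeasureTheory Pointwise

/-- The erosion `W⊖ε = {u ∈ W : b(u,ε) ⊆ W}` of a set by the closed ball of radius `ε`. -/
def erode {E : Type*} [PseudoMetricSpace E] (W : Set E) (ε : ℝ) : Set E :=
  {u ∈ W | Metric.closedBall u ε ⊆ W}

lemma exists_mem_cube (d : ℕ) (v : EuclideanSpace ℝ (Fin d)) : ∃ i, v ∈ cube d i := by
  refine ⟨fun j => ⌈v j - 1 / 2⌉, fun j => ⟨?_, ?_⟩⟩
  · have := Int.ceil_lt_add_one (v j - 1 / 2)
    linarith
  · have := Int.le_ceil (v j - 1 / 2)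
    linarith

lemma cube_dist_s12 (d : ℕ) (i : Fin d → ℤ) (v w : EuclideanSpace ℝ (Fin d))
    (hv : v ∈ cube d i) (hw : w ∈ cube d i) : dist w v ≤ d := by
  rw [EuclideanSpace.dist_eq]
  have h1 : ∑ j, dist (w j) (v j) ^ 2 ≤ (d : ℝ) := by
    have : ∑ j : Fin d, dist (w j) (v j) ^ 2 ≤ ∑ j : Fin d, (1 : ℝ) := by
      refine Finset.sum_le_sum fun j _ => ?_
      have a := hv j
      have b := hw j
      simp only [Set.mem_Ioc] at a b
      have : dist (w j) (v j) ≤ 1 := by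
        rw [Real.dist_eq, abs_le]
        constructor <;> linarith
      exact pow_le_one₀ dist_nonneg this
    simpa using this
  have h2 : (d : ℝ) ≤ (d : ℝ) ^ 2 := by
    exact_mod_cast Nat.le_self_pow two_ne_zero d
  exact Real.sqrt_le_iff.2 ⟨Nat.cast_nonneg d, h1.trans h2⟩

lemma WnStar_subset (d : ℕ) (W : Set (EuclideanSpace ℝ (Fin d))) : WnStar d W ⊆ W := by
  intro x hx
  simp only [WnStar, Set.mem_iUnion] at hx
  obtain ⟨i, hi, hx⟩ := hx
  exact hi hx

lemma mem_WnStar_of_ball (d : ℕ) (W : Set (EuclideanSpace ℝ (Fin d)))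
    (v : EuclideanSpace ℝ (Fin d)) (h : Metric.closedBall v d ⊆ W) : v ∈ WnStar d W := by
  obtain ⟨i, hi⟩ := exists_mem_cube d v
  simp only [WnStar, Set.mem_iUnion]
  exact ⟨i, fun w hw => h (cube_dist_s12 d i v w hi hw), hi⟩

lemma mem_erode_of_ball (d : ℕ) (W : Set (EuclideanSpace ℝ (Fin d))) (ε : ℝ) (hε : 0 ≤ ε)
    (u : EuclideanSpace ℝ (Fin d)) (h : Metric.closedBall u (ε + d) ⊆ W) :
    u ∈ erode (WnStar d W) ε := by
  have key : Metric.closedBall u ε ⊆ WnStar d W := by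
    intro v hv
    refine mem_WnStar_of_ball d W v (fun w hw => h ?_)
    rw [Metric.mem_closedBall] at *
    linarith [dist_triangle w v u]
  exact ⟨key (Metric.mem_closedBall_self hε), key⟩

lemma ball_subset_smul {E : Type*} [NormedAddCommGroup E] [NormedSpace ℝ E] (A : Set E)
    (hconv : Convex ℝ A) (r : ℝ) (hr : Metric.closedBall (0 : E) r ⊆ A)
    (n t : ℝ) (ht : 0 < t) (htn : t ≤ n) (u : E) (hu : u ∈ (n - t) • A) :
    Metric.closedBall u (t * r) ⊆ n • A := by
  intro v hv
  have e : n • A = (n - t) • A + t • A := by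
    rw [← hconv.add_smul (by linarith) ht.le]
    congr 1
    ring
  rw [e]
  refine Set.mem_add.2 ⟨u, hu, v - u, ?_, by abel⟩
  refine Set.mem_smul_set.2 ⟨t⁻¹ • (v - u), hr ?_, by rw [smul_inv_smul₀ ht.ne']⟩
  rw [mem_closedBall_zero_iff, norm_smul, Real.norm_eq_abs, abs_of_pos (inv_pos.2 ht)]
  rw [Metric.mem_closedBall, dist_eq_norm] at hv
  rw [inv_mul_le_iff₀ ht]
  exact hv

lemma vol_bound (d : ℕ) (hd : 1 ≤ d) (A : Set (EuclideanSpace ℝ (Fin d)))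
    (hconv : Convex ℝ A) (hcomp : IsCompact A) (r : ℝ) (hr0 : 0 < r)
    (hr : Metric.closedBall (0 : EuclideanSpace ℝ (Fin d)) r ⊆ A)
    (n ε t : ℝ) (hn : 0 < n) (hε : 0 ≤ ε) (ht : 0 < t) (htr : t * r = ε + d) :
    volume (WnStar d (n • A) \ erode (WnStar d (n • A)) ε) ≤
      ENNReal.ofReal (d * t * n ^ (d - 1) * (volume A).toReal) := by
  have hV : volume A ≠ ⊤ := hcomp.measure_lt_top.ne
  have hd' : (1 : ℝ) ≤ d := by exact_mod_cast hd
  have hpow : n ^ d = n * n ^ (d - 1) := by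
    rw [← pow_succ', Nat.sub_add_cancel hd]
  have hvol : ∀ s : ℝ, 0 ≤ s →
      volume (s • A) = ENNReal.ofReal (s ^ d * (volume A).toReal) := by
    intro s hs
    rw [Measure.addHaar_smul, finrank_euclideanSpace, Fintype.card_fin,
      abs_of_nonneg (by positivity), ENNReal.ofReal_mul (by positivity), ENNReal.ofReal_toReal hV]
  rcases le_total t n with h | h
  · have hs : 0 ≤ n - t := by linarith
    have hball := ball_subset_smul A hconv r hr n t ht h
    have hsub : (n - t) • A ⊆ n • A := fun u hu =>
      hball u hu (Metric.mem_closedBall_self (by positivity))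
    have hsub2 : WnStar d (n • A) \ erode (WnStar d (n • A)) ε ⊆ n • A \ (n - t) • A := by
      rintro u ⟨hu, hu2⟩
      refine ⟨WnStar_subset d _ hu, fun hu3 => hu2 ?_⟩
      exact mem_erode_of_ball d _ ε hε u (htr ▸ hball u hu3)
    refine (measure_mono hsub2).trans ?_
    have hc : IsCompact ((n - t) • A) := hcomp.smul _
    rw [measure_diff hsub hc.measurableSet.nullMeasurableSet hc.measure_lt_top.ne,
      hvol n hn.le, hvol _ hs, ← ENNReal.ofReal_sub _ (by positivity)]
    apply ENNReal.ofReal_le_ofReal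
    rw [← sub_mul]
    refine mul_le_mul_of_nonneg_right ?_ ENNReal.toReal_nonneg
    have hx : t / n ≤ 1 := (div_le_one hn).2 h
    have hb := one_add_mul_le_pow (a := -(t / n)) (by linarith) d
    have e1 : (n - t) ^ d = n ^ d * (1 + -(t / n)) ^ d := by
      rw [← mul_pow]
      congr 1
      field_simp
      ring
    have h2 := mul_le_mul_of_nonneg_left hb (by positivity : 0 ≤ n ^ d)
    rw [← e1] at h2
    have e2 : n ^ d * (1 + d * -(t / n)) = n ^ d - d * t * n ^ (d - 1) := by
      rw [hpow]
      field_simp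
      ring
    linarith
  · refine (measure_mono (Set.diff_subset.trans (WnStar_subset d _))).trans ?_
    rw [hvol n hn.le]
    apply ENNReal.ofReal_le_ofReal
    refine mul_le_mul_of_nonneg_right ?_ ENNReal.toReal_nonneg
    rw [hpow]
    refine mul_le_mul_of_nonneg_right ?_ (by positivity)
    nlinarith

theorem statement12 (d : ℕ) (hd : 1 ≤ d) (A : Set (EuclideanSpace ℝ (Fin d)))
    (hconv : Convex ℝ A) (hcomp : IsCompact A)
    (h0 : (0 : EuclideanSpace ℝ (Fin d)) ∈ interior A)
    (α : ℝ) (hα0 : 0 ≤ α) (hα1 : α < 1) :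
    ∃ C : ℝ, 0 < C ∧ ∃ N : ℕ, ∀ n : ℕ, N ≤ n →
      volume (WnStar d ((n : ℝ) • A) \
          erode (WnStar d ((n : ℝ) • A)) (2 * (n : ℝ) ^ α)) ≤
        ENNReal.ofReal (C * (n : ℝ) ^ ((d : ℝ) - 1 + α)) := by
  obtain ⟨r, hr0, hr⟩ := Metric.nhds_basis_closedBall.mem_iff.1 (mem_interior_iff_mem_nhds.1 h0)
  have hVn : 0 ≤ (volume A).toReal := ENNReal.toReal_nonneg
  refine ⟨d * ((2 + d) / r) * (volume A).toReal + 1, by positivity, 1, fun n hn => ?_⟩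
  have hn1 : (1 : ℝ) ≤ n := by exact_mod_cast hn
  have hn0 : (0 : ℝ) < n := by linarith
  have hp1 : 1 ≤ (n : ℝ) ^ α := Real.one_le_rpow hn1 hα0
  have ht : 0 < (2 * (n : ℝ) ^ α + d) / r := by positivity
  refine (vol_bound d hd A hconv hcomp r hr0 hr n (2 * (n : ℝ) ^ α) _ hn0 (by positivity) ht
    (div_mul_cancel₀ _ hr0.ne')).trans ?_
  apply ENNReal.ofReal_le_ofReal
  have e : (n : ℝ) ^ ((d : ℝ) - 1 + α) = (n : ℝ) ^ (d - 1) * (n : ℝ) ^ α := by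
    rw [Real.rpow_add hn0, ← Real.rpow_natCast, Nat.cast_sub hd, Nat.cast_one]
  rw [e]
  have hK : (2 * (n : ℝ) ^ α + d) / r ≤ (2 + d) / r * (n : ℝ) ^ α := by
    rw [div_mul_eq_mul_div]
    refine div_le_div_of_nonneg_right ?_ hr0.le
    have : (0 : ℝ) ≤ d := Nat.cast_nonneg d
    nlinarith
  calc d * ((2 * (n : ℝ) ^ α + d) / r) * (n : ℝ) ^ (d - 1) * (volume A).toReal
      ≤ d * ((2 + d) / r * (n : ℝ) ^ α) * (n : ℝ) ^ (d - 1) * (volume A).toReal := by gcongr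
    _ = d * ((2 + d) / r) * (volume A).toReal * ((n : ℝ) ^ (d - 1) * (n : ℝ) ^ α) := by ring
    _ ≤ _ := by
      refine mul_le_mul_of_nonneg_right (by linarith) (by positivity)
end
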